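/- arXiv:math/0306300 — 4 statements merged into one kernel-verified Lean document; each statement's English description precedes it below -/
import Mathlib

section
/- Let r ≥ 1 be an integer, λ_1,…,λ_r > 0 real numbers with Σ_{j=1}^r λ_j = 1/2, and μ_1,…,μ_r complex numbers with Re(μ_j) ≥ 0; set G(s) = Π_{j=1}^r Γ(λ_j s + μ_j). Then there exist real numbers A and B and a real number C > 0 such that for all t ≥ 1, conj(G(1/2 + it)) / G(1/2 + it) = e^{-it log(t/(2e)) + iπ/4 + iB} · t^{iA} · C^{-it} · (1 + O(1/t)), where the implied constant may depend on r, the λ_j and the μ_j. -/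
open Complex

/-- Stirling main term. -/
noncomputable def stS (z : ℂ) : ℂ := (z - 1 / 2) * Complex.log z - z

/-- Stirling increment. -/
noncomputable def stD (z : ℂ) : ℂ := stS (z + 1) - stS z - Complex.log z

lemma arg_bounds_of_re_pos {z : ℂ} (hz : 0 < z.re) :
    -(Real.pi / 2) < z.arg ∧ z.arg < Real.pi / 2 :=
  abs_lt.mp (Complex.abs_arg_lt_pi_div_two_iff.mpr (Or.inl hz))

lemma log_mul_of_re_pos {z w : ℂ} (hz : 0 < z.re) (hw : 0 < w.re) :
    Complex.log (z * w) = Complex.log z + Complex.log w := by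
  have h1 := arg_bounds_of_re_pos hz
  have h2 := arg_bounds_of_re_pos hw
  apply Complex.log_mul
  · rintro rfl; simp at hz
  · rintro rfl; simp at hw
  · constructor <;> linarith [h1.1, h1.2, h2.1, h2.2]

lemma stD_eq {z : ℂ} (hz : 0 < z.re) :
    stD z = (z + 1 / 2) * Complex.log (1 + z⁻¹) - 1 := by
  have hz0 : z ≠ 0 := by rintro rfl; simp at hz
  have h : Complex.log (z + 1) = Complex.log z + Complex.log (1 + z⁻¹) := by
    rw [← log_mul_of_re_pos hz]
    · congr 1; field_simp
    · simp only [Complex.add_re, Complex.one_re, Complex.inv_re]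
      have : 0 < Complex.normSq z := Complex.normSq_pos.mpr hz0
      positivity
  unfold stD stS
  rw [h]; ring

lemma norm_stD_le {z : ℂ} (hz : 0 < z.re) (h2 : 2 ≤ ‖z‖) : ‖stD z‖ ≤ 2 / ‖z‖ ^ 2 := by
  have hz0 : z ≠ 0 := by rintro rfl; simp at hz
  rw [stD_eq hz]
  set w := z⁻¹ with hw
  have hwn : ‖w‖ = ‖z‖⁻¹ := norm_inv z
  have hw2 : ‖w‖ ≤ 1 / 2 := by
    rw [hwn, inv_eq_one_div]; exact one_div_le_one_div_of_le (by norm_num) h2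
  have hl := Complex.norm_log_sub_logTaylor_le 2 (z := w) (by linarith)
  have ht : Complex.logTaylor (2 + 1) w = w - w ^ 2 / 2 := by
    simp [Complex.logTaylor_succ, Complex.logTaylor_zero]; ring
  rw [ht] at hl
  set r := Complex.log (1 + w) - (w - w ^ 2 / 2) with hr
  have hr3 : ‖r‖ ≤ ‖w‖ ^ 3 * (2 / 3) := by
    refine hl.trans ?_
    have : (1 - ‖w‖)⁻¹ ≤ 2 := by
      rw [inv_eq_one_div, div_le_iff₀] <;> linarith
    have h3 : 0 ≤ ‖w‖ ^ 3 := by positivity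
    norm_num
    nlinarith
  have hlog : Complex.log (1 + w) = r + (w - w ^ 2 / 2) := by rw [hr]; ring
  have hzw : z * w = 1 := mul_inv_cancel₀ hz0
  have e : (z + 1 / 2) * Complex.log (1 + w) - 1 = -(w ^ 2) / 4 + z * r + 1 / 2 * r := by
    rw [hlog]; linear_combination (1 - w / 2) * hzw
  rw [e]
  have hzn : ‖z‖ * ‖w‖ = 1 := by rw [← norm_mul, hzw, norm_one]
  have hrw : (2 : ℝ) / ‖z‖ ^ 2 = 2 * ‖w‖ ^ 2 := by rw [hwn, inv_pow]; rfl
  rw [hrw]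
  have n1 : ‖-(w ^ 2) / 4‖ = ‖w‖ ^ 2 / 4 := by simp
  have n2 : ‖z * r‖ ≤ ‖w‖ ^ 2 * (2 / 3) := by
    rw [norm_mul]
    calc ‖z‖ * ‖r‖ ≤ ‖z‖ * (‖w‖ ^ 3 * (2 / 3)) := by gcongr
      _ = (‖z‖ * ‖w‖) * ‖w‖ ^ 2 * (2 / 3) := by ring
      _ = _ := by rw [hzn]; ring
  have n3 : ‖1 / 2 * r‖ ≤ ‖w‖ ^ 2 * (1 / 6) := by
    rw [norm_mul]
    have : ‖(1 / 2 : ℂ)‖ = 1 / 2 := by norm_num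
    rw [this]
    have h3 : 0 ≤ ‖w‖ ^ 2 := by positivity
    nlinarith
  have := norm_add_le (-(w ^ 2) / 4 + z * r) (1 / 2 * r)
  have := norm_add_le (-(w ^ 2) / 4) (z * r)
  nlinarith [sq_nonneg ‖w‖]

lemma norm_stD_add_le {z : ℂ} (hz : 0 < z.re) (h2 : 2 ≤ z.im) (j : ℕ) :
    ‖stD (z + j)‖ ≤ 4 * (1 / (z.im - 1 + j) - 1 / (z.im - 1 + (j + 1 : ℕ))) := by
  have hj : (0 : ℝ) ≤ j := Nat.cast_nonneg j
  have hsq : (j : ℝ) ^ 2 + z.im ^ 2 ≤ ‖z + j‖ ^ 2 := by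
    rw [← Complex.normSq_eq_norm_sq, Complex.normSq_apply]
    simp
    nlinarith
  have hn : 2 ≤ ‖z + j‖ := by
    have := Complex.abs_im_le_norm (z + j)
    have h3 : (z + j).im = z.im := by simp
    rw [h3] at this
    linarith [le_abs_self z.im]
  refine (norm_stD_le (by simp; positivity) hn).trans ?_
  have e : 4 * (1 / (z.im - 1 + j) - 1 / (z.im - 1 + (j + 1 : ℕ))) =
      2 / ((z.im - 1 + j) * (z.im + j) / 2) := by
    have h1 : z.im - 1 + j ≠ 0 := by linarith
    have h2 : z.im + j ≠ 0 := by linarith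
    have h3 : z.im - 1 + (j + 1 : ℕ) = z.im + j := by push_cast; ring
    rw [h3]; field_simp; ring
  rw [e]
  apply div_le_div_of_nonneg_left (by norm_num)
  · apply div_pos _ (by norm_num)
    apply mul_pos <;> linarith
  · nlinarith [sq_nonneg (z.im - j)]

lemma summable_stD {z : ℂ} (hz : 0 < z.re) (h2 : 2 ≤ z.im) :
    Summable (fun j : ℕ => stD (z + j)) ∧ ‖∑' j : ℕ, stD (z + j)‖ ≤ 8 / z.im := by
  have hs : ∀ n : ℕ, ∑ j ∈ Finset.range n, ‖stD (z + j)‖ ≤ 8 / z.im := by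
    intro n
    calc _ ≤ ∑ j ∈ Finset.range n, 4 * (1 / (z.im - 1 + j) - 1 / (z.im - 1 + (j + 1 : ℕ))) :=
          Finset.sum_le_sum fun j _ => norm_stD_add_le hz h2 j
      _ = 4 * (1 / (z.im - 1) - 1 / (z.im - 1 + n)) := by
          rw [← Finset.mul_sum, Finset.sum_range_sub' (fun j : ℕ => 1 / (z.im - 1 + j))]
          simp
      _ ≤ 4 * (1 / (z.im - 1)) := by
          have : 0 ≤ 1 / (z.im - 1 + n) := by
            apply one_div_nonneg.mpr
            have : (0 : ℝ) ≤ n := Nat.cast_nonneg n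
            linarith
          linarith
      _ ≤ 8 / z.im := by
          rw [mul_one_div, div_le_div_iff₀] <;> linarith
  have hsum := summable_of_sum_range_le (fun j => norm_nonneg (stD (z + j))) hs
  exact ⟨hsum.of_norm, (norm_tsum_le_tsum_norm hsum).trans
    (Real.tsum_le_of_sum_range_le (fun j => norm_nonneg _) hs)⟩

lemma prod_eq_exp {z : ℂ} (hz : 0 < z.re) (n : ℕ) :
    ∏ j ∈ Finset.range n, (z + j) =
      Complex.exp (stS (z + n) - stS z - ∑ j ∈ Finset.range n, stD (z + j)) := by
  induction n with
  | zero => simp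
  | succ n ih =>
    rw [Finset.prod_range_succ, Finset.sum_range_succ, ih]
    have h0 : z + n ≠ 0 := by
      intro h
      have := congrArg Complex.re h
      simp at this
      have h3 : (0 : ℝ) ≤ n := Nat.cast_nonneg n
      linarith
    conv_lhs => rw [← Complex.exp_log h0]
    rw [← Complex.exp_add, Complex.exp_log h0]
    congr 1
    have : stD (z + n) = stS (z + n + 1) - stS (z + n) - Complex.log (z + n) := rfl
    rw [this]; push_cast; rw [← add_assoc]; ring

open Filter Topology in
lemma tendsto_aux {z : ℂ} (hz : 0 < z.re) :
    Tendsto (fun n : ℕ => (z + n + 1 / 2) * Complex.log n - n - stS (z + (n + 1 : ℕ)))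
      atTop (𝓝 0) := by
  have hg0 : Tendsto (fun n : ℕ => (z + 1) / (n : ℂ)) atTop (𝓝 0) :=
    tendsto_const_div_atTop_nhds_zero_nat (z + 1)
  have hg : Tendsto (fun n : ℕ => (n : ℂ) * ((z + 1) / (n : ℂ))) atTop (𝓝 (z + 1)) := by
    apply tendsto_const_nhds.congr'
    filter_upwards [eventually_ne_atTop 0] with n hn
    have : (n : ℂ) ≠ 0 := Nat.cast_ne_zero.mpr hn
    field_simp
  have h1 := Complex.tendsto_nat_mul_log_one_add_of_tendsto hg
  have h2 : Tendsto (fun n : ℕ => Complex.log (1 + (z + 1) / (n : ℂ))) atTop (𝓝 0) := by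
    have hc : ContinuousAt Complex.log (1 + 0) := by
      apply continuousAt_clog; simp
    have := hc.tendsto.comp (tendsto_const_nhds.add hg0 :
      Tendsto (fun n : ℕ => (1 : ℂ) + (z + 1) / (n : ℂ)) atTop (𝓝 (1 + 0)))
    simpa [Function.comp_def] using this
  have h3 := (tendsto_const_nhds (x := z + 1)).sub (h1.add (h2.const_mul (z + 1 / 2)))
  have h4 : z + 1 - (z + 1 + (z + 1 / 2) * 0) = 0 := by ring
  rw [h4] at h3
  apply h3.congr'
  filter_upwards [eventually_ne_atTop 0] with n hn
  have hnc : (n : ℂ) ≠ 0 := Nat.cast_ne_zero.mpr hn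
  have hnp : (0 : ℝ) < n := by positivity
  have e : Complex.log (z + (n + 1 : ℕ)) =
      Complex.log n + Complex.log (1 + (z + 1) / (n : ℂ)) := by
    rw [← log_mul_of_re_pos (by simpa using hnp)]
    · congr 1; push_cast; field_simp; ring
    · rw [Complex.add_re, Complex.div_natCast_re]
      simp; positivity
  unfold stS
  rw [e]; push_cast; ring

open Filter Topology in
theorem stirling_complex {z : ℂ} (hz : 0 < z.re) (h2 : 2 ≤ z.im) :
    ∃ E : ℂ, ‖E‖ ≤ 8 / z.im ∧
      Complex.Gamma z = ((Real.sqrt Real.pi * Real.sqrt 2 : ℝ) : ℂ) * Complex.exp (stS z + E) := by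
  obtain ⟨hs, hb⟩ := summable_stD hz h2
  refine ⟨_, hb, ?_⟩
  have hG := Complex.GammaSeq_tendsto_Gamma z
  refine tendsto_nhds_unique hG ?_
  have hst : Tendsto (fun n => ((Stirling.stirlingSeq n * Real.sqrt 2 : ℝ) : ℂ)) atTop
      (𝓝 ((Real.sqrt Real.pi * Real.sqrt 2 : ℝ) : ℂ)) :=
    (Complex.continuous_ofReal.tendsto _).comp
      (Stirling.tendsto_stirlingSeq_sqrt_pi.mul_const _)
  have hE : Tendsto (fun n : ℕ => Complex.exp (stS z + ∑ j ∈ Finset.range (n + 1), stD (z + j)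
      + ((z + n + 1 / 2) * Complex.log n - n - stS (z + (n + 1 : ℕ))))) atTop
      (𝓝 (Complex.exp (stS z + (∑' j : ℕ, stD (z + j)) + 0))) := by
    apply (Complex.continuous_exp.tendsto _).comp
    apply Tendsto.add _ (tendsto_aux hz)
    apply tendsto_const_nhds.add
    exact (hs.hasSum.tendsto_sum_nat).comp (tendsto_add_atTop_nat 1)
  have := hst.mul hE
  rw [add_zero] at this
  apply this.congr'
  filter_upwards [eventually_ne_atTop 0] with n hn
  have hnc : (n : ℂ) ≠ 0 := Nat.cast_ne_zero.mpr hn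
  have hnp : (0 : ℝ) < n := by positivity
  have hf : ((Nat.factorial n : ℝ)) = Stirling.stirlingSeq n * Real.sqrt 2 *
      Real.exp ((n + 1 / 2) * Real.log n - n) := by
    have h5 : Real.exp ((n + 1 / 2) * Real.log n - n) = Real.sqrt n * (n / Real.exp 1) ^ n := by
      have : Real.sqrt n = Real.exp (1 / 2 * Real.log n) := by
        rw [Real.sqrt_eq_rpow, Real.rpow_def_of_pos hnp, mul_comm]
      have h6 : (n / Real.exp 1 : ℝ) ^ n = Real.exp (n * (Real.log n - 1)) := by
        rw [Real.exp_nat_mul, Real.exp_sub, Real.exp_log hnp]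
      rw [this, h6, ← Real.exp_add]; congr 1; ring
    rw [h5, Stirling.stirlingSeq, Real.sqrt_mul (by norm_num)]
    have : Real.sqrt n ≠ 0 := by positivity
    have : Real.sqrt 2 ≠ 0 := by positivity
    field_simp
  have hfc : ((Nat.factorial n : ℂ)) = ((Stirling.stirlingSeq n * Real.sqrt 2 : ℝ) : ℂ) *
      Complex.exp ((n + 1 / 2) * Complex.log n - n) := by
    have := congrArg (fun x : ℝ => (x : ℂ)) hf
    simpa using this
  rw [Complex.GammaSeq, prod_eq_exp hz, hfc, Complex.cpow_def_of_ne_zero hnc]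
  rw [mul_left_comm, ← Complex.exp_add, mul_div_assoc, ← Complex.exp_sub]
  congr 2
  ring

lemma stS_expand (a : ℂ) (ha : 0 < a.re) (v : ℝ) (hv1 : 1 ≤ v) (hv : 2 * ‖a‖ ≤ v) :
    ∃ R : ℂ, ‖R‖ ≤ ((‖a‖ + 1) * ‖a‖ + ‖a‖ ^ 2 + (‖a‖ + 1) * ‖a‖ ^ 2) / v ∧
      stS (a + I * v) =
        (I * v + a - 1 / 2) * (Real.log v + I * (Real.pi / 2)) - I * v + R := by
  have hv0 : 0 < v := by linarith
  have hvc : (v : ℂ) ≠ 0 := by exact_mod_cast hv0.ne'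
  set u : ℂ := -I * a / v with hu
  have hun : ‖u‖ = ‖a‖ / v := by
    rw [hu]; simp [abs_of_pos hv0]
  have hu2 : ‖u‖ ≤ 1 / 2 := by
    rw [hun, div_le_div_iff₀] <;> linarith
  have hl := Complex.norm_log_one_add_sub_self_le (z := u) (by linarith)
  set r := Complex.log (1 + u) - u with hr
  have hr2 : ‖r‖ ≤ ‖u‖ ^ 2 := by
    refine hl.trans ?_
    have : (1 - ‖u‖)⁻¹ ≤ 2 := by
      rw [inv_eq_one_div, div_le_iff₀] <;> linarith
    have h3 : 0 ≤ ‖u‖ ^ 2 := by positivity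
    nlinarith
  have hIvu : I * v * u = a := by
    rw [hu]; field_simp; rw [Complex.I_sq]; ring
  have hlogI : Complex.log (I * v) = Real.log v + I * (Real.pi / 2) := by
    rw [mul_comm I, Complex.log_ofReal_mul hv0 Complex.I_ne_zero, Complex.log_I]; ring
  have hre : 0 < (1 + u).re := by
    have := Complex.abs_re_le_norm u
    have := neg_abs_le u.re
    simp; linarith
  have hlog : Complex.log (a + I * v) = Real.log v + I * (Real.pi / 2) + Complex.log (1 + u) := by
    have h1 := arg_bounds_of_re_pos hre
    have him : (1 + u).im < 0 := by
      have : u = ((1 / v : ℝ) : ℂ) * (-I * a) := by rw [hu]; push_cast; field_simp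
      rw [this, Complex.add_im, Complex.im_ofReal_mul]
      simp; positivity
    have hneg := Complex.arg_neg_iff.mpr him
    rw [← hlogI, ← Complex.log_mul]
    · congr 1; linear_combination -hIvu
    · exact mul_ne_zero Complex.I_ne_zero hvc
    · intro h; rw [h] at hre; simp at hre
    · rw [mul_comm I, Complex.arg_real_mul _ hv0, Complex.arg_I]
      constructor <;> linarith [h1.1, h1.2, Real.pi_pos]
  refine ⟨(a - 1 / 2) * u + (I * v + a - 1 / 2) * r, ?_, ?_⟩
  · have hN : 0 ≤ ‖a‖ := norm_nonneg a
    have hh : ‖(a - 1 / 2 : ℂ)‖ ≤ ‖a‖ + 1 := by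
      refine (norm_sub_le _ _).trans ?_
      have : ‖(1 / 2 : ℂ)‖ = 1 / 2 := by norm_num
      rw [this]; linarith
    have hh2 : ‖(I * v + a - 1 / 2 : ℂ)‖ ≤ v + (‖a‖ + 1) := by
      rw [add_sub_assoc]
      refine (norm_add_le _ _).trans ?_
      have : ‖I * (v : ℂ)‖ = v := by simp [abs_of_pos hv0]
      rw [this]; linarith
    calc ‖(a - 1 / 2) * u + (I * v + a - 1 / 2) * r‖
        ≤ ‖(a - 1 / 2) * u‖ + ‖(I * v + a - 1 / 2) * r‖ := norm_add_le _ _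
      _ ≤ (‖a‖ + 1) * (‖a‖ / v) + (v + (‖a‖ + 1)) * (‖a‖ / v) ^ 2 := by
          rw [norm_mul, norm_mul]
          rw [hun] at hr2
          rw [hun]
          gcongr
      _ = ((‖a‖ + 1) * ‖a‖ + ‖a‖ ^ 2 + (‖a‖ + 1) * ‖a‖ ^ 2 / v) / v := by
          field_simp; ring
      _ ≤ _ := by
          gcongr
          apply div_le_self (by positivity) hv1
  · unfold stS
    rw [hlog]
    have : Complex.log (1 + u) = u + r := by rw [hr]; ring
    rw [this]
    linear_combination hIvu

lemma phase (a : ℂ) (ha : 0 < a.re) :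
    ∃ K T : ℝ, ∀ v : ℝ, T ≤ v → ∃ e : ℝ, |e| ≤ K / v ∧
      (starRingEnd ℂ) (Complex.Gamma (a + I * v)) / Complex.Gamma (a + I * v) =
        Complex.exp (I * ((-2 * (v * Real.log v - v + (a.re - 1 / 2) * (Real.pi / 2)
          + a.im * Real.log v) + e : ℝ) : ℂ)) := by
  refine ⟨2 * (((‖a‖ + 1) * ‖a‖ + ‖a‖ ^ 2 + (‖a‖ + 1) * ‖a‖ ^ 2) + 16), 2 * ‖a‖ + 4, ?_⟩
  intro v hv
  have hN : 0 ≤ ‖a‖ := norm_nonneg a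
  have hv0 : 0 < v := by linarith
  obtain ⟨R, hR, hS⟩ := stS_expand a ha v (by linarith) (by linarith)
  have him : (a + I * v).im = a.im + v := by simp
  have hab := Complex.abs_im_le_norm a
  have hab2 := neg_abs_le a.im
  obtain ⟨E, hE, hG⟩ := stirling_complex (z := a + I * v) (by simpa using ha)
    (by rw [him]; linarith)
  refine ⟨-2 * (R + E).im, ?_, ?_⟩
  · have h1 := Complex.abs_im_le_norm (R + E)
    have h2 := norm_add_le R E
    have h3 : 8 / (a + I * v).im ≤ 16 / v := by
      rw [him, div_le_div_iff₀] <;> linarith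
    rw [abs_mul, mul_div_assoc, add_div]
    norm_num
    norm_num at h1
    linarith
  · rw [hG, hS]
    have hc : ((Real.sqrt Real.pi * Real.sqrt 2 : ℝ) : ℂ) ≠ 0 := by
      have : 0 < Real.sqrt Real.pi * Real.sqrt 2 := by positivity
      exact_mod_cast this.ne'
    rw [map_mul, Complex.conj_ofReal, mul_div_mul_left _ _ hc, ← Complex.exp_conj,
      ← Complex.exp_sub]
    congr 1
    have hp : (Real.pi / 2 : ℂ) = ((Real.pi / 2 : ℝ) : ℂ) := by push_cast; rfl
    rw [hp]
    generalize Real.pi / 2 = p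
    apply Complex.ext
    · simp
      ring
    · simp
      ring

lemma ratio_norm (w : ℂ) : ‖(starRingEnd ℂ) w / w‖ ≤ 1 := by
  rw [norm_div, RCLike.norm_conj]
  exact div_self_le_one _

theorem gamma_factor_ratio_asymptotic (r : ℕ) (hr : 1 ≤ r)
    (lam : Fin r → ℝ) (hlam : ∀ j, 0 < lam j) (hdeg : ∑ j, lam j = 1 / 2)
    (mu : Fin r → ℂ) (hmu : ∀ j, 0 ≤ (mu j).re)
    (G : ℂ → ℂ) (hG : ∀ s : ℂ, G s = ∏ j, Complex.Gamma ((lam j : ℂ) * s + mu j)) :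
    ∃ (A B C : ℝ), 0 < C ∧ ∃ K : ℝ, ∀ t : ℝ, 1 ≤ t →
      ‖(starRingEnd ℂ) (G (1 / 2 + Complex.I * t)) / G (1 / 2 + Complex.I * t) -
          Complex.exp (Complex.I *
              (-(t * Real.log (t / (2 * Real.exp 1))) + Real.pi / 4 + B)) *
            (t : ℂ) ^ (Complex.I * A) * (C : ℂ) ^ (-(Complex.I * t))‖ ≤ K / t := by
  have hph : ∀ j, ∃ K T : ℝ, ∀ v : ℝ, T ≤ v → ∃ e : ℝ, |e| ≤ K / v ∧
      (starRingEnd ℂ) (Complex.Gamma (((lam j / 2 : ℝ) + mu j) + I * v)) /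
          Complex.Gamma (((lam j / 2 : ℝ) + mu j) + I * v) =
        Complex.exp (I * ((-2 * (v * Real.log v - v + (lam j / 2 + (mu j).re - 1 / 2)
          * (Real.pi / 2) + (mu j).im * Real.log v) + e : ℝ) : ℂ)) := by
    intro j
    have := phase ((lam j / 2 : ℝ) + mu j) (by
      rw [Complex.add_re, Complex.ofReal_re]; linarith [hlam j, hmu j])
    simpa only [Complex.add_re, Complex.add_im, Complex.ofReal_re, Complex.ofReal_im, zero_add]
      using this
  choose K T hKT using hph
  -- the constants
  set A : ℝ := ∑ j, -2 * (mu j).im with hA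
  set B : ℝ := (∑ j, -2 * ((lam j / 2 + (mu j).re - 1 / 2) * (Real.pi / 2)
    + (mu j).im * Real.log (lam j))) - Real.pi / 4 with hB
  set c : ℝ := Real.log 2 + ∑ j, 2 * (lam j * Real.log (lam j)) with hc
  set T0 : ℝ := 1 + ∑ j, |T j| / lam j with hT0
  set K0 : ℝ := ∑ j, K j / lam j with hK0
  refine ⟨A, B, Real.exp c, Real.exp_pos c, max K0 (2 * T0), ?_⟩
  intro t ht
  have ht0 : 0 < t := by linarith
  have htc : (t : ℂ) ≠ 0 := by exact_mod_cast ht0.ne'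
  set Y : ℝ := -(t * Real.log (t / (2 * Real.exp 1))) + Real.pi / 4 + B + A * Real.log t - c * t
    with hY
  have hmain : Complex.exp (Complex.I *
              (-(t * Real.log (t / (2 * Real.exp 1))) + Real.pi / 4 + B)) *
            (t : ℂ) ^ (Complex.I * A) * ((Real.exp c : ℝ) : ℂ) ^ (-(Complex.I * t)) =
      Complex.exp (I * Y) := by
    have hce : ((Real.exp c : ℝ) : ℂ) ≠ 0 := by exact_mod_cast (Real.exp_pos c).ne'
    rw [Complex.cpow_def_of_ne_zero htc, Complex.cpow_def_of_ne_zero hce,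
      ← Complex.ofReal_log ht0.le, ← Complex.ofReal_log (Real.exp_pos c).le, Real.log_exp,
      ← Complex.exp_add, ← Complex.exp_add, hY]
    congr 1
    push_cast
    ring
  rw [hmain]
  by_cases htT : t < T0
  · have hn : ‖Complex.exp (I * Y)‖ = 1 := by
      rw [mul_comm]; exact Complex.norm_exp_ofReal_mul_I Y
    have h1 := norm_sub_le ((starRingEnd ℂ) (G (1 / 2 + Complex.I * t)) / G (1 / 2 + Complex.I * t))
      (Complex.exp (I * Y))
    have h2 := ratio_norm (G (1 / 2 + Complex.I * t))
    have h3 : 2 ≤ max K0 (2 * T0) / t := by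
      rw [le_div_iff₀ ht0]
      exact le_trans (by linarith) (le_max_right _ _)
    linarith
  · push Not at htT
    have hTj : ∀ j, T j ≤ lam j * t := by
      intro j
      have h1 : |T j| / lam j ≤ ∑ j, |T j| / lam j :=
        Finset.single_le_sum (f := fun j => |T j| / lam j)
          (fun i _ => div_nonneg (abs_nonneg _) (hlam i).le) (Finset.mem_univ j)
      have h2 : |T j| / lam j ≤ t := by linarith
      rw [div_le_iff₀ (hlam j)] at h2
      linarith [le_abs_self (T j)]
    choose e he hx using fun j => hKT j (lam j * t) (hTj j)
    have hratio : (starRingEnd ℂ) (G (1 / 2 + Complex.I * t)) / G (1 / 2 + Complex.I * t) =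
        Complex.exp (I * ((Y + ∑ j, e j : ℝ) : ℂ)) := by
      rw [hG, map_prod, ← Finset.prod_div_distrib]
      have harg : ∀ j, (lam j : ℂ) * (1 / 2 + I * t) + mu j =
          (((lam j / 2 : ℝ) + mu j) + I * (lam j * t : ℝ)) := by
        intro j; push_cast; ring
      simp_rw [harg, hx]
      rw [← Complex.exp_sum, ← Finset.mul_sum, ← Complex.ofReal_sum]
      congr 3
      rw [Finset.sum_add_distrib]
      congr 1
      have hl1 : Real.log (t / (2 * Real.exp 1)) = Real.log t - Real.log 2 - 1 := by
        rw [Real.log_div ht0.ne' (by positivity), Real.log_mul (by norm_num) (by positivity),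
          Real.log_exp]; ring
      have hl2 : ∀ j, Real.log (lam j * t) = Real.log (lam j) + Real.log t := fun j =>
        Real.log_mul (hlam j).ne' ht0.ne'
      have hexp : ∀ j, -2 * (lam j * t * Real.log (lam j * t) - lam j * t
            + (lam j / 2 + (mu j).re - 1 / 2) * (Real.pi / 2) + (mu j).im * Real.log (lam j * t)) =
          lam j * (-2 * t * Real.log t + 2 * t) - t * (2 * (lam j * Real.log (lam j)))
          + -2 * ((lam j / 2 + (mu j).re - 1 / 2) * (Real.pi / 2)
            + (mu j).im * Real.log (lam j)) + (-2 * (mu j).im) * Real.log t := by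
        intro j; rw [hl2]; ring
      simp_rw [hexp]
      rw [Finset.sum_add_distrib, Finset.sum_add_distrib, Finset.sum_sub_distrib,
        ← Finset.sum_mul, ← Finset.sum_mul, ← Finset.mul_sum, hdeg, ← hA, hY, hB, hc, hl1]
      ring
    rw [hratio]
    have hfac : Complex.exp (I * ((Y + ∑ j, e j : ℝ) : ℂ)) - Complex.exp (I * Y) =
        Complex.exp (I * Y) * (Complex.exp (I * ((∑ j, e j : ℝ) : ℂ)) - 1) := by
      rw [mul_sub, ← Complex.exp_add]; push_cast; ring_nf
    rw [hfac, norm_mul]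
    have hn : ‖Complex.exp (I * Y)‖ = 1 := by
      rw [mul_comm]; exact Complex.norm_exp_ofReal_mul_I Y
    rw [hn, one_mul]
    refine (Real.norm_exp_I_mul_ofReal_sub_one_le).trans ?_
    rw [Real.norm_eq_abs]
    calc |∑ j, e j| ≤ ∑ j, |e j| := Finset.abs_sum_le_sum_abs _ _
      _ ≤ ∑ j, K j / (lam j * t) := Finset.sum_le_sum fun j _ => he j
      _ = K0 / t := by
          rw [hK0, Finset.sum_div]
          exact Finset.sum_congr rfl fun j _ => by rw [div_div]
      _ ≤ _ := by gcongr; exact le_max_left _ _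
end

section
/- Let A be a real number, let x > 0 with x ≠ 1, let α > 0 and T ≥ 1. Then |∫_{αT}^{2αT} x^{it} t^{iA} dt| ≤ (2 + |A| log 2) / |log x|. -/
open Complex

/-- First-derivative bound for the oscillatory integral
`∫_{αT}^{2αT} x^{it} t^{iA} dt` when `x ≠ 1`. -/
theorem oscillatory_integral_bound (A : ℝ) (x : ℝ) (hx : 0 < x) (hx1 : x ≠ 1)
    (α : ℝ) (hα : 0 < α) (T : ℝ) (hT : 1 ≤ T) :
    ‖∫ t in (α * T)..(2 * α * T), (x : ℂ) ^ (Complex.I * t) * (t : ℂ) ^ (Complex.I * A)‖ ≤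
      (2 + |A| * Real.log 2) / |Real.log x| := by
  have ha : 0 < α * T := by positivity
  have hb : 2 * α * T = 2 * (α * T) := by ring
  rw [hb]
  set a := α * T with ha_def
  clear_value a
  set L := Real.log x with hL
  have hL0 : L ≠ 0 := Real.log_ne_zero_of_pos_of_ne_one hx hx1
  have hLC : (L : ℂ) ≠ 0 := by exact_mod_cast hL0
  have hle : a ≤ 2 * a := by linarith
  have hpos : ∀ t ∈ Set.uIcc a (2 * a), 0 < t := by
    intro t ht
    rw [Set.uIcc_of_le hle] at ht
    exact lt_of_lt_of_le ha ht.1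
  let u : ℝ → ℂ := fun t => Complex.exp (((A * Real.log t : ℝ) : ℂ) * I)
  let w : ℝ → ℂ := fun t => Complex.exp (((L * t : ℝ) : ℂ) * I)
  let u' : ℝ → ℂ := fun t => u t * (((A * t⁻¹ : ℝ) : ℂ) * I)
  let v : ℝ → ℂ := fun t => w t / (L * I)
  have hun : ∀ t, ‖u t‖ = 1 := fun t => Complex.norm_exp_ofReal_mul_I _
  have hvn : ∀ t, ‖v t‖ = 1 / |L| := fun t => by
    simp only [v, w, norm_div, Complex.norm_exp_ofReal_mul_I]
    simp
  have hu : ∀ t ∈ Set.uIcc a (2 * a), HasDerivAt u (u' t) t := by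
    intro t ht
    have h1 := (Real.hasDerivAt_log (hpos t ht).ne').const_mul A
    exact (h1.ofReal_comp.mul_const I).cexp
  have hv : ∀ t ∈ Set.uIcc a (2 * a), HasDerivAt v (w t) t := by
    intro t ht
    have h1 := (hasDerivAt_id t).const_mul L
    have h2 := ((h1.ofReal_comp.mul_const I).cexp).div_const ((L : ℂ) * I)
    have h3 : w t * (((L * 1 : ℝ) : ℂ) * I) / ((L : ℂ) * I) = w t := by
      rw [mul_one, mul_div_cancel_right₀ _ (mul_ne_zero hLC I_ne_zero)]
    rw [← h3]
    exact h2
  have huc : ContinuousOn u (Set.uIcc a (2 * a)) := fun t ht =>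
    (hu t ht).continuousAt.continuousWithinAt
  have hu'c : ContinuousOn u' (Set.uIcc a (2 * a)) := by
    refine huc.mul (ContinuousOn.mul ?_ continuousOn_const)
    refine Complex.continuous_ofReal.comp_continuousOn ?_
    exact continuousOn_const.mul (continuousOn_id.inv₀ fun t ht => (hpos t ht).ne')
  have hwc : Continuous w := by fun_prop
  have key := intervalIntegral.integral_mul_deriv_eq_deriv_mul hu hv
    hu'c.intervalIntegrable (hwc.intervalIntegrable _ _)
  have hcongr : ∫ t in a..(2 * a), (x : ℂ) ^ (Complex.I * t) * (t : ℂ) ^ (Complex.I * A)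
      = ∫ t in a..(2 * a), u t * w t := by
    refine intervalIntegral.integral_congr fun t ht => ?_
    have ht0 := hpos t ht
    have hxC : (x : ℂ) ≠ 0 := by exact_mod_cast hx.ne'
    have htC : (t : ℂ) ≠ 0 := by exact_mod_cast ht0.ne'
    simp only [u, w]
    rw [Complex.cpow_def_of_ne_zero hxC, Complex.cpow_def_of_ne_zero htC,
      ← Complex.ofReal_log hx.le, ← Complex.ofReal_log ht0.le, mul_comm]
    congr 2 <;> push_cast <;> ring
  have hint : ‖∫ t in a..(2 * a), u' t * v t‖ ≤ |A| * Real.log 2 / |L| := by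
    have hg : ∫ t in a..(2 * a), (|A| / |L|) * t⁻¹ = |A| * Real.log 2 / |L| := by
      rw [intervalIntegral.integral_const_mul, integral_inv_of_pos ha (by linarith),
        mul_div_cancel_right₀ _ ha.ne']
      ring
    rw [← hg]
    refine intervalIntegral.norm_integral_le_of_norm_le hle ?_ ?_
    · refine Filter.Eventually.of_forall fun t ht => le_of_eq ?_
      have ht0 : 0 < t := ha.trans ht.1
      rw [norm_mul, hvn]
      simp only [u', norm_mul, hun, Complex.norm_real, Complex.norm_I, Real.norm_eq_abs,
        abs_mul, abs_of_pos (inv_pos.2 ht0)]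
      ring
    · refine ContinuousOn.intervalIntegrable ?_
      exact continuousOn_const.mul (continuousOn_id.inv₀ fun t ht => (hpos t ht).ne')
  rw [hcongr, key]
  calc _ ≤ ‖u (2 * a) * v (2 * a)‖ + ‖u a * v a‖ + ‖∫ t in a..(2 * a), u' t * v t‖ :=
        (norm_sub_le _ _).trans (by gcongr; exact norm_sub_le _ _)
    _ ≤ 1 / |L| + 1 / |L| + |A| * Real.log 2 / |L| := by
        rw [norm_mul, norm_mul, hun, hun, hvn, hvn]
        linarith
    _ = _ := by ring
end

section
/- Let α > 0. There is a constant C (which may depend on α) such that for every T ≥ 1 and every positive integer n with T ≤ 2πn ≤ 2T, |∫_{αT}^{2αT} e^{i(t log(t/(2πenα)) − π/4)} dt − 2π √(nα) e^{−2πinα}| ≤ C ( T^{2/5} + min(√T, 1/|log(T/(2πn))|) + min(√T, 1/|log(T/(πn))|) ), with the convention that min(√T, 1/|log(T/(2πn))|) = √T when 2πn = T and min(√T, 1/|log(T/(πn))|) = √T when πn = T. -/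
open Complex
open scoped Classical Real


lemma ibp_bound (E : ℝ → ℂ) (r r' : ℝ → ℝ) (k : ℂ) (p q : ℝ) (hpq : p ≤ q)
    (hE : ∀ x ∈ Set.Icc p q, HasDerivAt E (k * r x * E x) x)
    (hEn : ∀ x ∈ Set.Icc p q, ‖E x‖ ≤ 1)
    (hr : ∀ x ∈ Set.Icc p q, HasDerivAt r (r' x) x)
    (hr' : ∀ x ∈ Set.Icc p q, 0 ≤ r' x)
    (hc : ContinuousOn r' (Set.Icc p q)) (hp : 0 < r p) :
    ‖k‖ * ‖∫ x in p..q, E x‖ ≤ 2 / r p := by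
  have hmono : MonotoneOn r (Set.Icc p q) := by
    apply monotoneOn_of_deriv_nonneg (convex_Icc p q)
    · exact fun x hx => (hr x hx).continuousAt.continuousWithinAt
    · intro x hx
      exact (hr x (interior_subset hx)).differentiableAt.differentiableWithinAt
    · intro x hx
      rw [(hr x (interior_subset hx)).deriv]
      exact hr' x (interior_subset hx)
  have hpos : ∀ x ∈ Set.Icc p q, 0 < r x := fun x hx =>
    lt_of_lt_of_le hp (hmono (Set.left_mem_Icc.2 hpq) hx hx.1)
  have hEc : ContinuousOn E (Set.Icc p q) :=
    fun x hx => (hE x hx).continuousAt.continuousWithinAt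
  have hrc : ContinuousOn r (Set.Icc p q) :=
    fun x hx => (hr x hx).continuousAt.continuousWithinAt
  have hu : Set.uIcc p q = Set.Icc p q := Set.uIcc_of_le hpq
  have hw : ContinuousOn (fun x => r' x / r x ^ 2) (Set.Icc p q) :=
    hc.div (hrc.pow 2) (fun x hx => (pow_pos (hpos x hx) 2).ne')
  have hwE : ContinuousOn (fun x => E x * ((r' x / r x ^ 2 : ℝ) : ℂ)) (Set.Icc p q) :=
    hEc.mul (Complex.continuous_ofReal.comp_continuousOn hw)
  have i1 : IntervalIntegrable E MeasureTheory.volume p q :=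
    ContinuousOn.intervalIntegrable (by rwa [hu])
  have i2 : IntervalIntegrable (fun x => E x * ((r' x / r x ^ 2 : ℝ) : ℂ))
      MeasureTheory.volume p q := ContinuousOn.intervalIntegrable (by rwa [hu])
  have i3 : IntervalIntegrable (fun x => r' x / r x ^ 2)
      MeasureTheory.volume p q := ContinuousOn.intervalIntegrable (by rwa [hu])
  have hinv : ∀ x ∈ Set.Icc p q, HasDerivAt (fun y => (r y)⁻¹) (-(r' x) / r x ^ 2) x :=
    fun x hx => (hr x hx).inv (hpos x hx).ne'
  have e1 : ∫ x in p..q, (k * E x - E x * ((r' x / r x ^ 2 : ℝ) : ℂ)) =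
      E q * (((r q)⁻¹ : ℝ) : ℂ) - E p * (((r p)⁻¹ : ℝ) : ℂ) := by
    apply intervalIntegral.integral_eq_sub_of_hasDerivAt
      (f := fun x => E x * (((r x)⁻¹ : ℝ) : ℂ))
    · intro x hx
      rw [hu] at hx
      have := (hE x hx).mul (hinv x hx).ofReal_comp
      refine this.congr_deriv ?_
      have h0 : (r x : ℂ) ≠ 0 := by exact_mod_cast (hpos x hx).ne'
      push_cast
      field_simp
      ring
    · exact (i1.const_mul k).sub i2
  have e2 : ∫ x in p..q, r' x / r x ^ 2 = (r p)⁻¹ - (r q)⁻¹ := by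
    have : ∫ x in p..q, r' x / r x ^ 2 = (-(r q)⁻¹) - (-(r p)⁻¹) := by
      apply intervalIntegral.integral_eq_sub_of_hasDerivAt (f := fun x => -(r x)⁻¹)
      · intro x hx
        rw [hu] at hx
        refine (hinv x hx).neg.congr_deriv ?_
        ring
      · exact i3
    rw [this]; ring
  rw [intervalIntegral.integral_sub (i1.const_mul k) i2,
    intervalIntegral.integral_const_mul] at e1
  have e3 : ‖∫ x in p..q, E x * ((r' x / r x ^ 2 : ℝ) : ℂ)‖ ≤ (r p)⁻¹ - (r q)⁻¹ := by
    rw [← e2]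
    apply intervalIntegral.norm_integral_le_of_norm_le hpq _ i3
    refine MeasureTheory.ae_of_all _ fun x hx => ?_
    have hx' : x ∈ Set.Icc p q := ⟨hx.1.le, hx.2⟩
    have h1 : 0 ≤ r' x / r x ^ 2 := div_nonneg (hr' x hx') (sq_nonneg _)
    rw [norm_mul, Complex.norm_real, Real.norm_of_nonneg h1]
    exact mul_le_of_le_one_left h1 (hEn x hx')
  have hq := hpos q (Set.right_mem_Icc.2 hpq)
  have b1 : ‖E q * (((r q)⁻¹ : ℝ) : ℂ)‖ ≤ (r q)⁻¹ := by
    rw [norm_mul, Complex.norm_real, Real.norm_of_nonneg (inv_pos.2 hq).le]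
    exact mul_le_of_le_one_left (inv_pos.2 hq).le (hEn q (Set.right_mem_Icc.2 hpq))
  have b2 : ‖E p * (((r p)⁻¹ : ℝ) : ℂ)‖ ≤ (r p)⁻¹ := by
    rw [norm_mul, Complex.norm_real, Real.norm_of_nonneg (inv_pos.2 hp).le]
    exact mul_le_of_le_one_left (inv_pos.2 hp).le (hEn p (Set.left_mem_Icc.2 hpq))
  rw [← norm_mul, sub_eq_iff_eq_add.1 e1]
  have t1 := norm_add_le (E q * (((r q)⁻¹ : ℝ) : ℂ) - E p * (((r p)⁻¹ : ℝ) : ℂ))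
    (∫ x in p..q, E x * ((r' x / r x ^ 2 : ℝ) : ℂ))
  have t2 := norm_sub_le (E q * (((r q)⁻¹ : ℝ) : ℂ)) (E p * (((r p)⁻¹ : ℝ) : ℂ))
  have : 2 / r p = 2 * (r p)⁻¹ := rfl
  linarith

lemma gauss_tail (b : ℂ) (hb : 0 < b.re) (x : ℝ) (hx : 0 < x) :
    ‖(∫ s in (0:ℝ)..x, cexp (-b * (s:ℂ) ^ 2)) - (π / b) ^ (1 / 2 : ℂ) / 2‖ ≤ 1 / (‖b‖ * x) := by
  have hint : MeasureTheory.Integrable (fun s : ℝ => cexp (-b * (s:ℂ) ^ 2)) :=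
    integrable_cexp_neg_mul_sq hb
  have hlim := MeasureTheory.intervalIntegral_tendsto_integral_Ioi (0:ℝ)
    hint.integrableOn (Filter.tendsto_id (α := ℝ) (x := Filter.atTop))
  rw [integral_gaussian_complex_Ioi hb] at hlim
  have hlim2 := (hlim.const_sub (∫ s in (0:ℝ)..x, cexp (-b * (s:ℂ) ^ 2))).norm
  refine le_of_tendsto hlim2 ?_
  filter_upwards [Filter.eventually_ge_atTop x] with R hR
  have hbn : 0 < ‖b‖ := norm_pos_iff.2 (by rintro rfl; simp at hb)
  have hs : (∫ s in (0:ℝ)..x, cexp (-b * (s:ℂ) ^ 2)) - (∫ s in (0:ℝ)..id R, cexp (-b * (s:ℂ) ^ 2))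
      = - ∫ s in x..R, cexp (-b * (s:ℂ) ^ 2) := by
    rw [id, ← intervalIntegral.integral_add_adjacent_intervals (a := 0) (b := x) (c := R)
      hint.intervalIntegrable hint.intervalIntegrable]
    simp
  rw [hs, norm_neg]
  have := ibp_bound (fun s : ℝ => cexp (-b * (s:ℂ) ^ 2)) (fun s => s) (fun _ => 1) (-(2 * b))
    x R hR ?_ ?_ (fun s _ => hasDerivAt_id s) (fun _ _ => zero_le_one) continuousOn_const hx
  · rw [norm_neg, norm_mul, Complex.norm_ofNat] at this
    rw [le_div_iff₀ (by positivity)]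
    rw [le_div_iff₀ hx] at this
    linarith
  · intro s hs
    have h1 : HasDerivAt (fun s : ℝ => (s:ℂ)) 1 s := Complex.ofRealCLM.hasDerivAt
    have := ((h1.pow 2).const_mul (-b)).cexp
    refine this.congr_deriv ?_
    simp
    ring
  · intro s hs
    rw [Complex.norm_exp]
    apply Real.exp_le_one_iff.2
    have : (-b * (s:ℂ) ^ 2).re = -(b.re * s ^ 2) := by
      rw [← Complex.ofReal_pow, Complex.re_mul_ofReal]; simp
    rw [this]
    have := mul_nonneg hb.le (sq_nonneg s)
    linarith

lemma fresnel_tail (c : ℝ) (hc : 0 < c) (x : ℝ) (hx : 0 < x) :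
    ‖(c:ℂ) * (∫ s in (0:ℝ)..x, cexp (I * ((c * (s ^ 2 / 2) : ℝ) : ℂ))) -
      ((√(2 * π * c) / 2 : ℝ) : ℂ) * cexp (I * (π / 4 : ℝ))‖ ≤ 2 / x := by
  set b0 : ℂ := -(I * c / 2) with hb0
  have hb0n : ‖b0‖ = c / 2 := by
    rw [hb0, norm_neg, norm_div, norm_mul]; simp [abs_of_pos hc]
  have hb0z : b0 ≠ 0 := by
    rw [← norm_pos_iff, hb0n]; positivity
  have hpb : (π:ℂ) / b0 = ((2 * π / c : ℝ):ℂ) * I := by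
    have : (c:ℂ) ≠ 0 := by exact_mod_cast hc.ne'
    rw [div_eq_iff hb0z, hb0]
    push_cast
    field_simp
    simp
  have hcpow : ((π:ℂ) / b0) ^ (1 / 2 : ℂ) = ((√(2 * π / c) : ℝ) : ℂ) * cexp (I * (π / 4 : ℝ)) := by
    have hr : 0 < 2 * π / c := by positivity
    have hr' : ((2 * π / c : ℝ) : ℂ) ≠ 0 := by exact_mod_cast hr.ne'
    rw [hpb, Complex.cpow_def_of_ne_zero (mul_ne_zero hr' I_ne_zero),
      Complex.log_ofReal_mul hr I_ne_zero, Complex.log_I, Real.sqrt_eq_rpow,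
      Real.rpow_def_of_pos hr, Complex.ofReal_exp, ← Complex.exp_add]
    congr 1
    push_cast
    ring
  have key : ‖(∫ s in (0:ℝ)..x, cexp (-b0 * (s:ℂ) ^ 2)) - (π / b0) ^ (1 / 2 : ℂ) / 2‖
      ≤ 1 / (‖b0‖ * x) := by
    have hcont : Continuous (fun b : ℂ => ∫ s in (0:ℝ)..x, cexp (-b * (s:ℂ) ^ 2)) := by
      apply intervalIntegral.continuous_parametric_intervalIntegral_of_continuous'
      fun_prop
    have hca : ContinuousAt (fun b : ℂ => (π / b : ℂ) ^ (1 / 2 : ℂ)) b0 := by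
      apply ContinuousAt.cpow
      · exact continuousAt_const.div continuousAt_id hb0z
      · exact continuousAt_const
      · rw [hpb]; right
        simp [hc.ne', Real.pi_ne_zero]
    have hL : ContinuousAt (fun b : ℂ => ‖(∫ s in (0:ℝ)..x, cexp (-b * (s:ℂ) ^ 2)) -
        (π / b) ^ (1 / 2 : ℂ) / 2‖) b0 :=
      (hcont.continuousAt.sub (hca.div_const 2)).norm
    have hR : ContinuousAt (fun b : ℂ => 1 / (‖b‖ * x)) b0 := by
      apply ContinuousAt.div continuousAt_const
      · fun_prop
      · rw [hb0n]; positivity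
    have hpath : Filter.Tendsto (fun ε : ℝ => b0 + (ε:ℂ)) (nhdsWithin 0 (Set.Ioi 0)) (nhds b0) := by
      have : Continuous (fun ε : ℝ => b0 + (ε:ℂ)) := by fun_prop
      have := this.tendsto 0
      simp only [Complex.ofReal_zero, add_zero] at this
      exact this.mono_left nhdsWithin_le_nhds
    refine le_of_tendsto_of_tendsto (hL.tendsto.comp hpath) (hR.tendsto.comp hpath) ?_
    filter_upwards [self_mem_nhdsWithin] with ε hε
    apply gauss_tail _ _ _ hx
    simpa [hb0] using hε
  rw [hcpow, hb0n] at key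
  have e1 : ∀ s : ℝ, I * ((c * (s ^ 2 / 2) : ℝ) : ℂ) = -b0 * (s:ℂ) ^ 2 := by
    intro s; rw [hb0]; push_cast; ring
  simp_rw [e1]
  have hsq : √(2 * π * c) = c * √(2 * π / c) := by
    rw [show 2 * π * c = c ^ 2 * (2 * π / c) by field_simp, Real.sqrt_mul (sq_nonneg c),
      Real.sqrt_sq hc.le]
  rw [hsq]
  have : (c:ℂ) * (∫ s in (0:ℝ)..x, cexp (-b0 * (s:ℂ) ^ 2)) -
      ((c * √(2 * π / c) / 2 : ℝ) : ℂ) * cexp (I * (π / 4 : ℝ)) =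
      c * ((∫ s in (0:ℝ)..x, cexp (-b0 * (s:ℂ) ^ 2)) -
       ((√(2 * π / c) : ℝ) : ℂ) * cexp (I * (π / 4 : ℝ)) / 2) := by
    push_cast; ring
  rw [this, norm_mul, Complex.norm_real, Real.norm_of_nonneg hc.le]
  calc _ ≤ c * (1 / (c / 2 * x)) := by gcongr
    _ = 2 / x := by field_simp

lemma fresnel_bound (c : ℝ) (hc : 0 < c) (x : ℝ) (hx : 0 ≤ x) :
    ‖(c:ℂ) * (∫ s in (0:ℝ)..x, cexp (I * ((c * (s ^ 2 / 2) : ℝ) : ℂ))) -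
      ((√(2 * π * c) / 2 : ℝ) : ℂ) * cexp (I * (π / 4 : ℝ))‖ ≤ 4 * √c := by
  have hsc : 0 < √c := Real.sqrt_pos.2 hc
  by_cases h : 1 / √c ≤ x
  · have hx0 : 0 < x := lt_of_lt_of_le (by positivity) h
    refine (fresnel_tail c hc x hx0).trans ?_
    rw [div_le_iff₀ hx0]
    rw [div_le_iff₀ hsc] at h
    linarith
  · push Not at h
    refine (norm_sub_le _ _).trans ?_
    have h1 : ‖∫ s in (0:ℝ)..x, cexp (I * ((c * (s ^ 2 / 2) : ℝ) : ℂ))‖ ≤ 1 * |x - 0| := by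
      apply intervalIntegral.norm_integral_le_of_norm_le_const
      intro s _
      rw [mul_comm, Complex.norm_exp_ofReal_mul_I]
    have h2 : ‖cexp (I * (π / 4 : ℝ))‖ = 1 := by
      rw [mul_comm, Complex.norm_exp_ofReal_mul_I]
    rw [norm_mul, norm_mul, h2, Complex.norm_real, Complex.norm_real, Real.norm_of_nonneg hc.le,
      Real.norm_of_nonneg (by positivity)]
    rw [sub_zero, one_mul, abs_of_nonneg hx] at h1
    have h3 : √(2 * π * c) ≤ 3 * √c := by
      apply Real.sqrt_le_iff.2 ⟨by positivity, ?_⟩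
      rw [mul_pow, Real.sq_sqrt hc.le]
      nlinarith [Real.pi_lt_four]
    rw [lt_div_iff₀ hsc] at h
    have h4 : c * x ≤ √c := by
      nlinarith [Real.mul_self_sqrt hc.le]
    nlinarith [mul_le_mul_of_nonneg_left h1 hc.le]

lemma norm_exp_diff (x y : ℝ) : ‖cexp (I * (x:ℂ)) - cexp (I * (y:ℂ))‖ ≤ |x - y| := by
  have : cexp (I * (x:ℂ)) - cexp (I * (y:ℂ)) =
      cexp ((y:ℂ) * I) * (cexp (I * ((x - y : ℝ) : ℂ)) - 1) := by
    rw [mul_sub, ← Complex.exp_add, mul_one]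
    congr 2
    · push_cast; ring
    · ring
  rw [this, norm_mul, Complex.norm_exp_ofReal_mul_I, one_mul]
  exact Real.norm_exp_I_mul_ofReal_sub_one_le

lemma side_bound (f r r' : ℝ → ℝ) (B c δ : ℝ) (hB : 0 ≤ B) (hc : 0 < c) (hδ : 0 < δ)
    (hf : ∀ s ∈ Set.Icc 0 B, HasDerivAt f (r s) s)
    (hr : ∀ s ∈ Set.Icc 0 B, HasDerivAt r (r' s) s)
    (hr' : ∀ s ∈ Set.Icc 0 B, 0 ≤ r' s)
    (hrc : ContinuousOn r' (Set.Icc 0 B))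
    (hf0 : f 0 = 0)
    (h1 : ∀ s ∈ Set.Icc 0 B, |r s - s| ≤ 2 * s ^ 2)
    (h2 : ∀ s ∈ Set.Icc 0 B, s / 2 ≤ r s) :
    ‖(c:ℂ) * (∫ s in (0:ℝ)..B, cexp (I * ((c * f s : ℝ) : ℂ))) -
      ((√(2 * π * c) / 2 : ℝ) : ℂ) * cexp (I * (π / 4 : ℝ))‖ ≤
      2 * c ^ 2 * δ ^ 4 + 6 / δ + (if B = 0 then 4 * √c else min (4 * √c) (2 / B)) := by
  set M := ((√(2 * π * c) / 2 : ℝ) : ℂ) * cexp (I * (π / 4 : ℝ)) with hM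
  have hfc : ContinuousOn f (Set.Icc 0 B) := fun x hx => (hf x hx).continuousAt.continuousWithinAt
  have hEc : ContinuousOn (fun s => cexp (I * ((c * f s : ℝ) : ℂ))) (Set.Icc 0 B) := by
    fun_prop
  have hQ : Continuous (fun s : ℝ => cexp (I * ((c * (s ^ 2 / 2) : ℝ) : ℂ))) := by fun_prop
  have hInt : ∀ x ∈ Set.Icc 0 B, ∀ y ∈ Set.Icc 0 B,
      IntervalIntegrable (fun s => cexp (I * ((c * f s : ℝ) : ℂ))) MeasureTheory.volume x y :=
    fun x hx y hy => (hEc.mono (Set.uIcc_subset_Icc hx hy)).intervalIntegrable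
  -- comparison on `[0,m]`
  have comp : ∀ m, 0 ≤ m → m ≤ B → m ≤ δ →
      ‖(c:ℂ) * (∫ s in (0:ℝ)..m, cexp (I * ((c * f s : ℝ) : ℂ))) -
        (c:ℂ) * (∫ s in (0:ℝ)..m, cexp (I * ((c * (s ^ 2 / 2) : ℝ) : ℂ)))‖ ≤ 2 * c ^ 2 * δ ^ 4 := by
    intro m hm0 hmB hmδ
    rw [← mul_sub, ← intervalIntegral.integral_sub
      (hInt 0 ⟨le_rfl, hB⟩ m ⟨hm0, hmB⟩) (hQ.intervalIntegrable _ _), norm_mul,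
      Complex.norm_real, Real.norm_of_nonneg hc.le]
    have hd : ∀ s ∈ Set.Icc 0 m, |f s - s ^ 2 / 2| ≤ 2 * δ ^ 2 * δ := by
      intro s hs
      have := (convex_Icc 0 m).norm_image_sub_le_of_norm_hasDerivWithin_le
        (f := fun s => f s - s ^ 2 / 2) (f' := fun s => r s - s) (C := 2 * δ ^ 2)
        (x := 0) (y := s) ?_ ?_ ⟨le_rfl, hm0⟩ hs
      · simp only [hf0, Real.norm_eq_abs] at this
        simp only [ne_eq, OfNat.ofNat_ne_zero, not_false_eq_true, zero_pow, zero_div, sub_zero,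
          abs_of_nonneg hs.1] at this
        refine this.trans ?_
        have := hs.2
        gcongr
        linarith
      · intro x hx
        have h := (hf x ⟨hx.1, hx.2.trans hmB⟩).sub (((hasDerivAt_id x).pow 2).div_const 2)
        refine (h.congr_deriv ?_).hasDerivWithinAt
        simp
      · intro x hx
        refine (h1 x ⟨hx.1, hx.2.trans hmB⟩).trans ?_
        have := hx.1
        have := hx.2.trans hmδ
        gcongr
    have : ‖∫ s in (0:ℝ)..m, (cexp (I * ((c * f s : ℝ) : ℂ)) -
        cexp (I * ((c * (s ^ 2 / 2) : ℝ) : ℂ)))‖ ≤ (c * (2 * δ ^ 2 * δ)) * |m - 0| := by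
      apply intervalIntegral.norm_integral_le_of_norm_le_const
      intro s hs
      rw [Set.uIoc_of_le hm0] at hs
      refine (norm_exp_diff _ _).trans ?_
      rw [← mul_sub, abs_mul, abs_of_pos hc]
      exact mul_le_mul_of_nonneg_left (hd s ⟨hs.1.le, hs.2⟩) hc.le
    rw [sub_zero, abs_of_nonneg hm0] at this
    calc _ ≤ c * ((c * (2 * δ ^ 2 * δ)) * δ) := by
          apply mul_le_mul_of_nonneg_left _ hc.le
          refine this.trans ?_
          gcongr
      _ = _ := by ring
  have hite : 0 ≤ (if B = 0 then 4 * √c else min (4 * √c) (2 / B)) := by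
    split_ifs
    · positivity
    · exact le_min (by positivity) (by positivity)
  by_cases hBδ : B ≤ δ
  · have hb : ‖(c:ℂ) * (∫ s in (0:ℝ)..B, cexp (I * ((c * (s ^ 2 / 2) : ℝ) : ℂ))) - M‖ ≤
        (if B = 0 then 4 * √c else min (4 * √c) (2 / B)) := by
      split_ifs with h0
      · exact fresnel_bound c hc B hB
      · exact le_min (fresnel_bound c hc B hB)
          (fresnel_tail c hc B (lt_of_le_of_ne hB (Ne.symm h0)))
    have t := norm_sub_le_norm_sub_add_norm_sub
      ((c:ℂ) * (∫ s in (0:ℝ)..B, cexp (I * ((c * f s : ℝ) : ℂ))))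
      ((c:ℂ) * (∫ s in (0:ℝ)..B, cexp (I * ((c * (s ^ 2 / 2) : ℝ) : ℂ)))) M
    have := comp B hB le_rfl hBδ
    have : 0 ≤ 6 / δ := by positivity
    linarith
  · push Not at hBδ
    have hδm : δ ∈ Set.Icc 0 B := ⟨hδ.le, hBδ.le⟩
    have hsub : Set.Icc δ B ⊆ Set.Icc 0 B := Set.Icc_subset_Icc_left hδ.le
    have hrδ := h2 δ hδm
    have hib := ibp_bound (fun s => cexp (I * ((c * f s : ℝ) : ℂ))) r r' (I * c) δ B hBδ.le
      ?_ ?_ (fun x hx => hr x (hsub hx)) (fun x hx => hr' x (hsub hx)) (hrc.mono hsub)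
      (by linarith)
    · have h4 : 2 / r δ ≤ 4 / δ := by
        rw [div_le_div_iff₀ (by linarith) hδ]; linarith
      rw [norm_mul, Complex.norm_I, one_mul, ← norm_mul] at hib
      have hsplit := intervalIntegral.integral_add_adjacent_intervals
        (hInt 0 ⟨le_rfl, hB⟩ δ hδm) (hInt δ hδm B ⟨hB, le_rfl⟩)
      rw [← hsplit, mul_add]
      have c1 := comp δ hδ.le hBδ.le le_rfl
      have c2 := fresnel_tail c hc δ hδ
      rw [← hM] at c2
      set X := (c:ℂ) * (∫ s in (0:ℝ)..δ, cexp (I * ((c * f s : ℝ) : ℂ)))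
      set Y := (c:ℂ) * (∫ s in δ..B, cexp (I * ((c * f s : ℝ) : ℂ)))
      set Z := (c:ℂ) * (∫ s in (0:ℝ)..δ, cexp (I * ((c * (s ^ 2 / 2) : ℝ) : ℂ)))
      have e : X + Y - M = (X - Z) + (Z - M) + Y := by ring
      rw [e]
      have := norm_add₃_le (a := X - Z) (b := Z - M) (c := Y)
      have : 6 / δ = 2 / δ + 4 / δ := by ring
      linarith
    · intro x hx
      have := (((hf x (hsub hx)).const_mul c).ofReal_comp.const_mul I).cexp
      refine this.congr_deriv ?_
      push_cast
      ring
    · intro x hx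
      rw [mul_comm, Complex.norm_exp_ofReal_mul_I]

/-- The normalized phase. -/
noncomputable def phs (u : ℝ) : ℝ := u * Real.log u - u + 1

lemma phs_deriv (u : ℝ) (hu : 0 < u) : HasDerivAt phs (Real.log u) u := by
  have h := (((hasDerivAt_id u).mul (Real.hasDerivAt_log hu.ne')).sub
    (hasDerivAt_id u)).add_const 1
  refine h.congr_deriv ?_
  simp [hu.ne']

lemma right_bound (B c δ : ℝ) (hB : 0 ≤ B) (hB1 : B ≤ 1) (hc : 0 < c) (hδ : 0 < δ) :
    ‖(c:ℂ) * (∫ s in (0:ℝ)..B, cexp (I * ((c * phs (1 + s) : ℝ) : ℂ))) -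
      ((√(2 * π * c) / 2 : ℝ) : ℂ) * cexp (I * (π / 4 : ℝ))‖ ≤
      2 * c ^ 2 * δ ^ 4 + 6 / δ + (if B = 0 then 4 * √c else min (4 * √c) (2 / B)) := by
  have lo : ∀ s ∈ Set.Icc 0 B, s / (1 + s) ≤ Real.log (1 + s) := by
    intro s hs
    have hs1 : 0 < 1 + s := by linarith [hs.1]
    have := Real.one_sub_inv_le_log_of_pos hs1
    refine le_trans (le_of_eq ?_) this
    field_simp; ring
  have hi : ∀ s ∈ Set.Icc 0 B, Real.log (1 + s) ≤ s := by
    intro s hs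
    have hs1 : 0 < 1 + s := by linarith [hs.1]
    linarith [Real.log_le_sub_one_of_pos hs1]
  apply side_bound (fun s => phs (1 + s)) (fun s => Real.log (1 + s)) (fun s => (1 + s)⁻¹) B c δ
    hB hc hδ
  · intro s hs
    exact (phs_deriv (1 + s) (by linarith [hs.1])).comp_const_add 1 s
  · intro s hs
    exact (Real.hasDerivAt_log (by linarith [hs.1] : (1 + s) ≠ 0)).comp_const_add 1 s
  · intro s hs
    have := hs.1
    positivity
  · apply ContinuousOn.inv₀ (by fun_prop)
    intro s hs
    linarith [hs.1]
  · simp [phs]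
  · intro s hs
    have a := lo s hs
    have b := hi s hs
    have hs0 := hs.1
    rw [abs_sub_comm, abs_of_nonneg (by linarith)]
    have : s - s / (1 + s) ≤ 2 * s ^ 2 := by
      have : s - s / (1 + s) = s ^ 2 / (1 + s) := by field_simp; ring
      rw [this, div_le_iff₀ (by linarith)]
      nlinarith [sq_nonneg s, mul_nonneg (sq_nonneg s) hs0]
    linarith
  · intro s hs
    refine le_trans ?_ (lo s hs)
    have hs0 := hs.1
    have hs1 := hs.2
    gcongr
    linarith

lemma left_bound (B c δ : ℝ) (hB : 0 ≤ B) (hB1 : B ≤ 1 / 2) (hc : 0 < c) (hδ : 0 < δ) :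
    ‖(c:ℂ) * (∫ s in (0:ℝ)..B, cexp (I * ((c * phs (1 - s) : ℝ) : ℂ))) -
      ((√(2 * π * c) / 2 : ℝ) : ℂ) * cexp (I * (π / 4 : ℝ))‖ ≤
      2 * c ^ 2 * δ ^ 4 + 6 / δ + (if B = 0 then 4 * √c else min (4 * √c) (2 / B)) := by
  have lo : ∀ s ∈ Set.Icc 0 B, s ≤ - Real.log (1 - s) := by
    intro s hs
    have hs1 : 0 < 1 - s := by linarith [hs.2]
    linarith [Real.log_le_sub_one_of_pos hs1]
  have hi : ∀ s ∈ Set.Icc 0 B, - Real.log (1 - s) ≤ s / (1 - s) := by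
    intro s hs
    have hs1 : 0 < 1 - s := by linarith [hs.2]
    have := Real.one_sub_inv_le_log_of_pos hs1
    have e : s / (1 - s) = - (1 - (1 - s)⁻¹) := by field_simp; ring
    rw [e]; linarith
  apply side_bound (fun s => phs (1 - s)) (fun s => - Real.log (1 - s)) (fun s => (1 - s)⁻¹) B c δ
    hB hc hδ
  · intro s hs
    exact (phs_deriv (1 - s) (by linarith [hs.2])).comp_const_sub 1 s
  · intro s hs
    have h0 : (1 - s) ≠ 0 := by linarith [hs.2]
    have := ((Real.hasDerivAt_log h0).comp_const_sub 1 s).neg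
    rwa [neg_neg] at this
  · intro s hs
    have : 0 < 1 - s := by linarith [hs.2]
    positivity
  · apply ContinuousOn.inv₀ (by fun_prop)
    intro s hs
    linarith [hs.2]
  · simp [phs]
  · intro s hs
    have a := lo s hs
    have b := hi s hs
    have hs0 := hs.1
    have hs1 := hs.2
    rw [abs_of_nonneg (by linarith)]
    have h1s : 0 < 1 - s := by linarith
    have : s / (1 - s) - s ≤ 2 * s ^ 2 := by
      have : s / (1 - s) - s = s ^ 2 / (1 - s) := by field_simp; ring
      rw [this, div_le_iff₀ h1s]
      nlinarith [sq_nonneg s, mul_nonneg (sq_nonneg s) (by linarith : 0 ≤ 1 / 2 - s)]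
    linarith
  · intro s hs
    have := lo s hs
    have := hs.1
    linarith

lemma min_aux (K P Q s l : ℝ) (_hs : 0 ≤ s) (hK : 0 ≤ K)
    (h1 : P ≤ K * s) (h2 : Q ≤ K * l) : min P Q ≤ K * min s l := by
  rw [mul_min_of_nonneg _ _ hK]
  exact min_le_min h1 h2

lemma scaled_integral (c a b : ℝ) (hc : 0 < c) (ha : 0 < a) (hb : 0 < b) :
    (∫ t in (c * a)..(c * b), cexp (I * ((t * Real.log (t / (c * Real.exp 1)) : ℝ) -
      (π / 4 : ℝ)))) = cexp (-(I * c)) * cexp (-(I * (π / 4 : ℝ))) *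
      (c * ∫ u in a..b, cexp (I * ((c * phs u : ℝ) : ℂ))) := by
  rw [← intervalIntegral.smul_integral_comp_mul_left]
  rw [Complex.real_smul, mul_left_comm]
  congr 1
  rw [← intervalIntegral.integral_const_mul]
  apply intervalIntegral.integral_congr
  intro u hu
  have hu0 : 0 < u := lt_of_lt_of_le (lt_min ha hb) hu.1
  simp only
  rw [← Complex.exp_add, ← Complex.exp_add]
  congr 1
  have e : c * u / (c * Real.exp 1) = u / Real.exp 1 := by field_simp
  rw [e, Real.log_div hu0.ne' (Real.exp_pos 1).ne', Real.log_exp, phs]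
  push_cast
  ring

/-- Stationary-phase evaluation (Titchmarsh, Lemma 4.6) of
`∫_{αT}^{2αT} e^{i(t log(t/(2πenα)) − π/4)} dt` for `T ≤ 2πn ≤ 2T`: the main term is
`2π √(nα) e^{−2πinα}`, with the stated error terms (where, by convention, the term
`min(√T, 1/|log(T/(2πn))|)` is read as `√T` when `2πn = T`, and similarly for
`min(√T, 1/|log(T/(πn))|)` when `πn = T`). -/
theorem stationary_phase_eval (α : ℝ) (hα : 0 < α) :
    ∃ C : ℝ, ∀ (T : ℝ), 1 ≤ T → ∀ n : ℕ, 0 < n →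
      T ≤ 2 * π * n → 2 * π * n ≤ 2 * T →
      ‖(∫ t in (α * T)..(2 * α * T),
            Complex.exp (Complex.I *
              ((t * Real.log (t / (2 * π * Real.exp 1 * n * α)) : ℝ) - (π / 4 : ℝ)))) -
          (2 * π * Real.sqrt (n * α) : ℝ) *
            Complex.exp (-(2 * π * Complex.I * n * α))‖ ≤
        C * (T ^ ((2 : ℝ) / 5) +
          (if T = 2 * π * n then Real.sqrt T
            else min (Real.sqrt T) (1 / |Real.log (T / (2 * π * n))|)) +
          (if T = π * n then Real.sqrt T
            else min (Real.sqrt T) (1 / |Real.log (T / (π * n))|))) := by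
  set K : ℝ := 4 * √(2 * α) + 4 with hK
  have hK0 : 0 ≤ K := by positivity
  refine ⟨16 * α ^ 2 + 12 + K, ?_⟩
  intro T hT n hn hl hu
  have hn' : (0:ℝ) < n := by exact_mod_cast hn
  have hpi := Real.pi_pos
  have hT0 : 0 < T := by linarith
  set N : ℝ := 2 * π * n with hN
  have hN0 : 0 < N := by positivity
  set c : ℝ := N * α with hc
  have hc0 : 0 < c := by positivity
  set a : ℝ := T / N with ha
  have ha0 : 0 < a := by positivity
  have ha1 : a ≤ 1 := by rw [ha, div_le_one hN0]; exact hl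
  have ha2 : 1 / 2 ≤ a := by rw [ha, le_div_iff₀ hN0]; linarith
  have hca : α * T = c * a := by rw [hc, ha]; field_simp
  have hcb : 2 * α * T = c * (2 * a) := by rw [hc, ha]; field_simp
  have hce : 2 * π * Real.exp 1 * n * α = c * Real.exp 1 := by rw [hc, hN]; ring
  have hb : T / (π * n) = 2 * a := by rw [ha, hN]; field_simp
  have hiff : T = π * n ↔ 2 * a - 1 = 0 := by
    rw [← hb, sub_eq_zero, div_eq_one_iff_eq (by positivity)]
  have hiff' : T = N ↔ 1 - a = 0 := by
    rw [sub_eq_zero, eq_comm (a := (1:ℝ)), ha, div_eq_one_iff_eq hN0.ne']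
  set δ : ℝ := T ^ (-(2 / 5) : ℝ) with hδ
  have hδ0 : 0 < δ := Real.rpow_pos_of_pos hT0 _
  have hδi : 1 / δ = T ^ ((2:ℝ) / 5) := by
    rw [hδ, Real.rpow_neg hT0.le, one_div, inv_inv]
  have hδ4 : T ^ 2 * δ ^ 4 = T ^ ((2:ℝ) / 5) := by
    rw [hδ, ← Real.rpow_natCast, ← Real.rpow_natCast, ← Real.rpow_mul hT0.le,
      ← Real.rpow_add hT0]
    norm_num
  have hcT : c ≤ 2 * α * T := by rw [hc]; nlinarith
  have herr : 2 * c ^ 2 * δ ^ 4 + 6 / δ ≤ (8 * α ^ 2 + 6) * T ^ ((2:ℝ) / 5) := by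
    have h1 : c ^ 2 ≤ (2 * α * T) ^ 2 := by gcongr
    have h2 : 2 * c ^ 2 * δ ^ 4 ≤ 2 * (2 * α * T) ^ 2 * δ ^ 4 := by gcongr
    have h3 : 2 * (2 * α * T) ^ 2 * δ ^ 4 = 8 * α ^ 2 * (T ^ 2 * δ ^ 4) := by ring
    rw [h3, hδ4] at h2
    have h4 : 6 / δ = 6 * (1 / δ) := by ring
    rw [h4, hδi]
    linarith
  have hsq : 4 * √c ≤ K * √T := by
    have h1 : √c ≤ √(2 * α) * √T := by
      rw [← Real.sqrt_mul (by positivity)]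
      exact Real.sqrt_le_sqrt hcT
    have h2 := Real.sqrt_nonneg T
    rw [hK]
    linarith
  have hK4 : 4 ≤ K := by rw [hK]; linarith [Real.sqrt_nonneg (2 * α)]
  have hleft : (if 1 - a = 0 then 4 * √c else min (4 * √c) (2 / (1 - a))) ≤
      K * (if T = N then √T else min (√T) (1 / |Real.log (T / N)|)) := by
    by_cases h : 1 - a = 0
    · rw [if_pos h, if_pos (hiff'.2 h)]; exact hsq
    · rw [if_neg h, if_neg (fun h' => h (hiff'.1 h'))]
      apply min_aux _ _ _ _ _ (Real.sqrt_nonneg T) hK0 hsq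
      rw [← ha]
      have ha3 : a < 1 := lt_of_le_of_ne ha1 (fun h' => h (by rw [h']; ring))
      have hlog : Real.log a < 0 := Real.log_neg ha0 ha3
      have hlow := Real.one_sub_inv_le_log_of_pos ha0
      have hinv : a⁻¹ - 1 ≤ 2 * (1 - a) := by
        have : a⁻¹ - 1 = (1 - a) / a := by field_simp
        rw [this, div_le_iff₀ ha0]
        nlinarith
      rw [abs_of_neg hlog, mul_one_div, div_le_div_iff₀ (by linarith) (by linarith)]
      nlinarith
  have hright : (if 2 * a - 1 = 0 then 4 * √c else min (4 * √c) (2 / (2 * a - 1))) ≤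
      K * (if T = π * n then √T else min (√T) (1 / |Real.log (T / (π * n))|)) := by
    by_cases h : 2 * a - 1 = 0
    · rw [if_pos h, if_pos (hiff.2 h)]; exact hsq
    · rw [if_neg h, if_neg (fun h' => h (hiff.1 h'))]
      apply min_aux _ _ _ _ _ (Real.sqrt_nonneg T) hK0 hsq
      rw [hb]
      have ha3 : 1 < 2 * a := lt_of_le_of_ne (by linarith) (fun h' => h (by rw [← h']; ring))
      have hlog : 0 < Real.log (2 * a) := Real.log_pos ha3
      have hup := Real.log_le_sub_one_of_pos (by linarith : 0 < 2 * a)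
      rw [abs_of_pos hlog, mul_one_div, div_le_div_iff₀ (by linarith) hlog]
      nlinarith
  have hphc : ContinuousOn (fun u => cexp (I * ((c * phs u : ℝ) : ℂ))) (Set.Ioi 0) := by
    have : ContinuousOn phs (Set.Ioi 0) :=
      fun x hx => (phs_deriv x hx).continuousAt.continuousWithinAt
    fun_prop
  have hInt : ∀ x y : ℝ, 0 < x → 0 < y →
      IntervalIntegrable (fun u => cexp (I * ((c * phs u : ℝ) : ℂ))) MeasureTheory.volume x y := by
    intro x y hx hy
    apply (hphc.mono _).intervalIntegrable
    intro z hz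
    exact lt_of_lt_of_le (lt_min hx hy) hz.1
  have hsplit : (∫ u in a..(2 * a), cexp (I * ((c * phs u : ℝ) : ℂ))) =
      (∫ s in (0:ℝ)..(1 - a), cexp (I * ((c * phs (1 - s) : ℝ) : ℂ))) +
      (∫ s in (0:ℝ)..(2 * a - 1), cexp (I * ((c * phs (1 + s) : ℝ) : ℂ))) := by
    rw [intervalIntegral.integral_comp_sub_left (fun u => cexp (I * ((c * phs u : ℝ) : ℂ))) 1,
      intervalIntegral.integral_comp_add_left (fun u => cexp (I * ((c * phs u : ℝ) : ℂ))) 1]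
    rw [← intervalIntegral.integral_add_adjacent_intervals (hInt a 1 ha0 one_pos)
      (hInt 1 (2 * a) one_pos (by linarith))]
    congr 2 <;> ring
  have hmain : ((2 * π * √(n * α) : ℝ) : ℂ) * cexp (-(2 * π * I * n * α)) =
      cexp (-(I * c)) * cexp (-(I * (π / 4 : ℝ))) *
      (((√(2 * π * c) / 2 : ℝ) : ℂ) * cexp (I * (π / 4 : ℝ)) +
       ((√(2 * π * c) / 2 : ℝ) : ℂ) * cexp (I * (π / 4 : ℝ))) := by
    have e1 : √(2 * π * c) = 2 * π * √(n * α) := by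
      rw [show 2 * π * c = (2 * π) ^ 2 * (n * α) by rw [hc, hN]; ring,
        Real.sqrt_mul (sq_nonneg _), Real.sqrt_sq (by positivity)]
    have e2 : -(2 * π * I * n * α) = -(I * (c:ℂ)) := by
      rw [hc, hN]; push_cast; ring
    have e3 : cexp (-(I * (π / 4 : ℝ))) * cexp (I * (π / 4 : ℝ)) = 1 := by
      rw [← Complex.exp_add]; simp
    rw [e1, e2]
    push_cast at e3 ⊢
    linear_combination (-(2 * (π:ℂ) * (√(n * α) : ℝ)) * cexp (-(I * c))) * e3
  have hL := left_bound (1 - a) c δ (by linarith) (by linarith) hc0 hδ0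
  have hR := right_bound (2 * a - 1) c δ (by linarith) (by linarith) hc0 hδ0
  rw [hca, hcb, hce, scaled_integral c a (2 * a) hc0 ha0 (by linarith), hsplit, hmain, ← mul_sub,
    norm_mul, norm_mul]
  have n1 : ‖cexp (-(I * (c:ℂ)))‖ = 1 := by
    rw [show -(I * (c:ℂ)) = ((-c : ℝ) : ℂ) * I by push_cast; ring,
      Complex.norm_exp_ofReal_mul_I]
  have n2 : ‖cexp (-(I * ((π / 4 : ℝ) : ℂ)))‖ = 1 := by
    rw [show -(I * ((π / 4 : ℝ) : ℂ)) = ((-(π / 4) : ℝ) : ℂ) * I by push_cast; ring,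
      Complex.norm_exp_ofReal_mul_I]
  rw [n1, n2, one_mul, one_mul, mul_add, add_sub_add_comm]
  refine (norm_add_le _ _).trans ?_
  have hTp : 0 ≤ T ^ ((2:ℝ) / 5) := by positivity
  have p1 : 0 ≤ (if T = N then √T else min (√T) (1 / |Real.log (T / N)|)) := by
    split_ifs <;> positivity
  have p2 : 0 ≤ (if T = π * n then √T else min (√T) (1 / |Real.log (T / (π * n))|)) := by
    split_ifs <;> positivity
  have q : 0 ≤ 16 * α ^ 2 + 12 := by positivity
  have q1 := mul_nonneg q p1
  have q2 := mul_nonneg q p2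
  have q3 := mul_nonneg hK0 hTp
  linarith
end

section
/- Let q be a positive integer and let g : ℕ → ℂ be a function with g(1) = 1 that is multiplicative (g(mn) = g(m) g(n) whenever m and n are coprime positive integers) and periodic modulo q (g(n + q) = g(n) for all positive integers n). Then there exists a Dirichlet character χ modulo q such that g(n) = χ(n) for every positive integer n coprime to q. -/
/-- A multiplicative function `g : ℕ → ℂ` with `g 1 = 1` that is
periodic modulo a positive integer `q` agrees with some Dirichlet character `χ` mod `q`
on all positive integers coprime to `q`. -/
theorem periodic_multiplicative_eq_dirichlet_character (q : ℕ) (hq : 0 < q)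
    (g : ℕ → ℂ) (hg1 : g 1 = 1)
    (hmul : ∀ m n : ℕ, 0 < m → 0 < n → Nat.Coprime m n → g (m * n) = g m * g n)
    (hper : ∀ n : ℕ, 0 < n → g (n + q) = g n) :
    ∃ χ : DirichletCharacter ℂ q, ∀ n : ℕ, 0 < n → Nat.Coprime n q → g n = χ n := by
  have : NeZero q := ⟨hq.ne'⟩
  have hk : ∀ k n : ℕ, 0 < n → g (n + q * k) = g n := by
    intro k n hn
    induction k with
    | zero => simp
    | succ k ih => rw [Nat.mul_succ, ← add_assoc, hper _ (by omega), ih]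
  have hle : ∀ a b : ℕ, 0 < a → a ≤ b → (a : ZMod q) = b → g a = g b := by
    intro a b ha hab h
    obtain ⟨k, hk'⟩ := (Nat.modEq_iff_dvd' hab).1 ((ZMod.natCast_eq_natCast_iff _ _ _).1 h)
    have : b = a + q * k := by omega
    rw [this, hk k a ha]
  have hcongr : ∀ a b : ℕ, 0 < a → 0 < b → (a : ZMod q) = b → g a = g b := by
    intro a b ha hb h
    rcases le_total a b with hab | hab
    · exact hle a b ha hab h
    · exact (hle b a hb hab h.symm).symm
  have hcast : ∀ u : ZMod q, ((u.val + q : ℕ) : ZMod q) = u := by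
    intro u
    simp
  let f : (ZMod q)ˣ →* ℂ :=
    { toFun := fun u => g ((u : ZMod q).val + q)
      map_one' := by
        rw [← hg1]
        exact hcongr _ _ (by omega) one_pos (by rw [hcast]; simp)
      map_mul' := by
        intro u v
        obtain ⟨p, hpgt, hp, hpv⟩ :=
          Nat.forall_exists_prime_gt_and_eq_mod v.isUnit ((u : ZMod q).val + q)
        have h1 : g ((v : ZMod q).val + q) = g p :=
          hcongr _ _ (by omega) (by omega) (by rw [hcast, hpv])
        rw [h1, ← hmul _ _ (by omega) (by omega)
          (Nat.coprime_of_lt_prime (by omega) (by omega) hp).symm]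
        apply hcongr _ _ (by omega) (Nat.mul_pos (by omega) (by omega))
        rw [hcast, Nat.cast_mul, hcast, hpv, Units.val_mul] }
  refine ⟨MulChar.ofUnitHom f.toHomUnits, fun n hn hc => ?_⟩
  rw [← ZMod.coe_unitOfCoprime n hc, MulChar.ofUnitHom_coe, MonoidHom.coe_toHomUnits]
  exact hcongr _ _ hn (by omega) (by rw [hcast]; simp)
end
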